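/- arXiv:2605.13562 — 7 statements merged into one kernel-verified Lean document; each statement's English description precedes it below -/
import Mathlib

section
/- For every real parameter a > 1/2 and every s ∈ ℝ, with the squared norm of the second fundamental form defined by |II|²(s) := 2·(B''(s)/B(s) − 1), one has the identity |II|²(s)·B(s)⁴ = 2·K², equivalently B(s)³·B''(s) − B(s)⁴ = K². -/
namespace MoriCatenoid

/-- Profile function `B(s) = √(a·cosh(2s) − 1/2)` of the Mori family. -/
noncomputable def B (a s : ℝ) : ℝ := Real.sqrt (a * Real.cosh (2 * s) - 1 / 2)

/-- Profile function `A(s) = √(a·cosh(2s) + 1/2)` of the Mori family. -/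
noncomputable def A (a s : ℝ) : ℝ := Real.sqrt (a * Real.cosh (2 * s) + 1 / 2)

/-- The constant `K = √(a² − 1/4)`. -/
noncomputable def K (a : ℝ) : ℝ := Real.sqrt (a ^ 2 - 1 / 4)

/-- The angle function `φ(s) = K·∫₀ˢ dt/(A(t)²·B(t))`. -/
noncomputable def φ (a s : ℝ) : ℝ := K a * ∫ t in (0:ℝ)..s, 1 / ((A a t) ^ 2 * B a t)

/-- The mode-one Jacobi field `f_*(s) = d/ds (A(s)·cosh(φ(s)))`. -/
noncomputable def fstar (a s : ℝ) : ℝ := deriv (fun t => A a t * Real.cosh (φ a t)) s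

/-- Squared norm of the second fundamental form, `|II|²(s) = 2·(B''(s)/B(s) − 1)`. -/
noncomputable def IIsq (a s : ℝ) : ℝ := 2 * (deriv (deriv (B a)) s / B a s - 1)

/-- The mode-`k` potential `W_k(s) = |II|²(s) − 2 − k²/B(s)²`. -/
noncomputable def W (a : ℝ) (k : ℤ) (s : ℝ) : ℝ := IIsq a s - 2 - (k : ℝ) ^ 2 / (B a s) ^ 2

/-- Inverse hyperbolic cosine: `arcosh x = log (x + √(x² − 1))`. -/
noncomputable def arcosh (x : ℝ) : ℝ := Real.log (x + Real.sqrt (x ^ 2 - 1))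

/-- The axial boost field `u_*(s) = −a·sinh(2s)/B(s)`. -/
noncomputable def ustar (a s : ℝ) : ℝ := -a * Real.sinh (2 * s) / B a s

/-- The radial quadratic form of mode `k`:
`S_k(u) = ∫_{−s₀}^{s₀} (B·u'² − B·W_k·u²) − coth(r)·B(s₀)·(u(s₀)² + u(−s₀)²)`,
where `u'` is the derivative of `u` within `[−s₀, s₀]`. -/
noncomputable def Sk (a s₀ r : ℝ) (k : ℤ) (u : ℝ → ℝ) : ℝ :=
  (∫ s in (-s₀)..s₀,
      (B a s * (derivWithin u (Set.Icc (-s₀) s₀) s) ^ 2 - B a s * W a k s * u s ^ 2))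
    - Real.cosh r / Real.sinh r * B a s₀ * (u s₀ ^ 2 + u (-s₀) ^ 2)

theorem arg_pos (a : ℝ) (ha : 1 / 2 < a) (s : ℝ) : 0 < a * Real.cosh (2 * s) - 1 / 2 := by
  nlinarith [Real.one_le_cosh (2 * s)]

theorem B_pos (a : ℝ) (ha : 1 / 2 < a) (s : ℝ) : 0 < B a s :=
  Real.sqrt_pos.mpr (arg_pos a ha s)

theorem B_hasDerivAt (a : ℝ) (ha : 1 / 2 < a) (s : ℝ) :
    HasDerivAt (B a) (a * Real.sinh (2 * s) / B a s) s := by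
  have h2 : HasDerivAt (fun t : ℝ => 2 * t) 2 s := by
    simpa using (hasDerivAt_id s).const_mul 2
  have h := (((h2.cosh).const_mul a).sub_const (1 / 2)).sqrt (arg_pos a ha s).ne'
  have hB := (B_pos a ha s).ne'
  refine HasDerivAt.congr_deriv h ?_
  change a * (Real.sinh (2 * s) * 2) / (2 * B a s) = _
  field_simp

theorem B_deriv2 (a : ℝ) (ha : 1 / 2 < a) (s : ℝ) :
    deriv (deriv (B a)) s = (a * (Real.cosh (2 * s) * 2) * B a s
      - a * Real.sinh (2 * s) * (a * Real.sinh (2 * s) / B a s)) / B a s ^ 2 := by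
  have e : deriv (B a) = fun t => a * Real.sinh (2 * t) / B a t :=
    funext fun t => (B_hasDerivAt a ha t).deriv
  have h2 : HasDerivAt (fun t : ℝ => 2 * t) 2 s := by
    simpa using (hasDerivAt_id s).const_mul 2
  rw [e]
  exact (((h2.sinh).const_mul a).div (B_hasDerivAt a ha s) (B_pos a ha s).ne').deriv

/-- Norm of the second fundamental form: `|II|²(s)·B(s)⁴ = 2·K²`, equivalently
`B(s)³·B''(s) − B(s)⁴ = K²`. -/
theorem second_fundamental_form_identity (a : ℝ) (ha : 1 / 2 < a) (s : ℝ) :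
    IIsq a s * B a s ^ 4 = 2 * K a ^ 2 ∧
    B a s ^ 3 * deriv (deriv (B a)) s - B a s ^ 4 = K a ^ 2 := by
  have hB := (B_pos a ha s).ne'
  have hsq : B a s ^ 2 = a * Real.cosh (2 * s) - 1 / 2 := Real.sq_sqrt (arg_pos a ha s).le
  have hK : K a ^ 2 = a ^ 2 - 1 / 4 := Real.sq_sqrt (by nlinarith)
  have key : B a s ^ 3 * deriv (deriv (B a)) s - B a s ^ 4 = K a ^ 2 := by
    have h1 : B a s ^ 3 * deriv (deriv (B a)) s
        = 2 * (a * Real.cosh (2 * s)) * B a s ^ 2 - a ^ 2 * Real.sinh (2 * s) ^ 2 := by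
      rw [B_deriv2 a ha s]
      field_simp
    have h4 : B a s ^ 4 = (B a s ^ 2) ^ 2 := by ring
    rw [h1, h4, hsq, hK, Real.sinh_sq]
    ring
  refine ⟨?_, key⟩
  rw [← key, IIsq]
  field_simp

end MoriCatenoid
end

section
/- Suppose s₀ > 0 satisfies the free boundary condition tanh(φ(s₀)) = B(s₀)·K/(a·sinh(2s₀)). Then B(s₀)² > K², and with r := arcosh(A(s₀)·cosh(φ(s₀))) (so r > 0) one has sinh(r)² = B(s₀)⁴/(B(s₀)² − K²) and coth(r) = a·sinh(2s₀)/B(s₀)² = B'(s₀)/B(s₀). -/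
namespace MoriCatenoid

/-- Geometric boundary identities: if `s₀ > 0` satisfies the free boundary
condition, then `B(s₀)² > K²`, `r := arcosh(A(s₀)·cosh(φ(s₀))) > 0`,
`sinh(r)² = B(s₀)⁴/(B(s₀)² − K²)` and
`coth(r) = a·sinh(2s₀)/B(s₀)² = B'(s₀)/B(s₀)`. -/
theorem boundary_coth_identity (a : ℝ) (ha : 1 / 2 < a) (s₀ : ℝ) (hs₀ : 0 < s₀)
    (hFBC : Real.tanh (φ a s₀) = B a s₀ * K a / (a * Real.sinh (2 * s₀)))
    (r : ℝ) (hr : r = arcosh (A a s₀ * Real.cosh (φ a s₀))) :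
    B a s₀ ^ 2 > K a ^ 2 ∧
    0 < r ∧
    Real.sinh r ^ 2 = B a s₀ ^ 4 / (B a s₀ ^ 2 - K a ^ 2) ∧
    Real.cosh r / Real.sinh r = a * Real.sinh (2 * s₀) / B a s₀ ^ 2 ∧
    a * Real.sinh (2 * s₀) / B a s₀ ^ 2 = deriv (B a) s₀ / B a s₀ := by
  have hc1 : 1 < Real.cosh (2 * s₀) := Real.one_lt_cosh.mpr (by positivity)
  have hSpos : 0 < a * Real.sinh (2 * s₀) :=
    mul_pos (by linarith) (Real.sinh_pos_iff.mpr (by linarith))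
  have hac : a < a * Real.cosh (2 * s₀) := by nlinarith
  have hBpos : 0 < B a s₀ := Real.sqrt_pos.mpr (by linarith)
  have hApos : 0 < A a s₀ := Real.sqrt_pos.mpr (by linarith)
  have hB2 : B a s₀ ^ 2 = a * Real.cosh (2 * s₀) - 1 / 2 := Real.sq_sqrt (by linarith)
  have hA2 : A a s₀ ^ 2 = B a s₀ ^ 2 + 1 := by
    rw [hB2, A, Real.sq_sqrt (by linarith)]; ring
  have hK2 : K a ^ 2 = a ^ 2 - 1 / 4 := Real.sq_sqrt (by nlinarith)
  have hS2 : (a * Real.sinh (2 * s₀)) ^ 2 = (B a s₀ ^ 2 + 1) * B a s₀ ^ 2 - K a ^ 2 := by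
    rw [hB2, hK2, mul_pow, Real.sinh_sq]; ring
  have hder : deriv (B a) s₀ = a * Real.sinh (2 * s₀) / B a s₀ := by
    have h1 : HasDerivAt (fun s : ℝ => 2 * s) 2 s₀ := by
      simpa using (hasDerivAt_id s₀).const_mul (2 : ℝ)
    have h2 := ((h1.cosh.const_mul a).sub_const (1 / 2)).sqrt (by linarith)
    have h3 : HasDerivAt (B a) _ s₀ := h2
    rw [h3.deriv]
    change _ / (2 * B a s₀) = _
    field_simp
  have hchp : 0 < Real.cosh (φ a s₀) := Real.cosh_pos _
  have hsh := Real.cosh_sq (φ a s₀)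
  rw [Real.tanh_eq_sinh_div_cosh, div_eq_div_iff hchp.ne' hSpos.ne'] at hFBC
  generalize Real.cosh (φ a s₀) = C at *
  generalize Real.sinh (φ a s₀) = D at *
  generalize a * Real.sinh (2 * s₀) = S at *
  generalize B a s₀ = b at *
  generalize A a s₀ = α at *
  generalize K a = k at *
  have hkey : (b ^ 2 + 1) * (b ^ 2 - k ^ 2) * C ^ 2 = S ^ 2 := by
    have h : D ^ 2 * S ^ 2 = b ^ 2 * k ^ 2 * C ^ 2 := by
      rw [← mul_pow, hFBC]; ring
    have h' : D ^ 2 = C ^ 2 - 1 := by linarith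
    rw [h'] at h
    linear_combination h - C ^ 2 * hS2
  have hgt : 0 < b ^ 2 - k ^ 2 := by
    by_contra hn
    push Not at hn
    have h1 : 0 < S ^ 2 := by positivity
    have h2 : 0 < (b ^ 2 + 1) * C ^ 2 := by positivity
    nlinarith
  have hX2 : (α * C) ^ 2 = S ^ 2 / (b ^ 2 - k ^ 2) := by
    rw [eq_div_iff hgt.ne', mul_pow, hA2]; linarith
  have hX21 : (α * C) ^ 2 - 1 = b ^ 4 / (b ^ 2 - k ^ 2) := by
    rw [hX2, hS2]; field_simp; ring
  have hXp : 0 < α * C := by positivity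
  have hq : 0 < b ^ 4 / (b ^ 2 - k ^ 2) := by positivity
  have hX1 : 1 < α * C := by nlinarith
  have hr' : r = Real.arcosh (α * C) := hr
  have hrpos : 0 < r := hr' ▸ Real.arcosh_pos hX1
  have hcosh : Real.cosh r = α * C := by rw [hr', Real.cosh_arcosh hX1.le]
  have hsinh : Real.sinh r ^ 2 = b ^ 4 / (b ^ 2 - k ^ 2) := by
    rw [Real.sinh_sq, hcosh, hX21]
  have hsp : 0 < Real.sinh r := Real.sinh_pos_iff.mpr hrpos
  refine ⟨by linarith, hrpos, hsinh, ?_, ?_⟩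
  · have : 0 < Real.cosh r := Real.cosh_pos r
    rw [← sq_eq_sq₀ (by positivity) (by positivity), div_pow, div_pow, hsinh, hcosh, hX2]
    field_simp
  · rw [hder]; field_simp

end MoriCatenoid
end

section
/- Closure of condition (E) for 1/2 < a ≤ 1: if 1/2 < a ≤ 1, then 3·B(s)² − 2·K² ≥ 0 for every s ∈ ℝ, and if moreover s₀ > 0 satisfies the free boundary condition tanh(φ(s₀)) = B(s₀)·K/(a·sinh(2s₀)), then for every continuously differentiable h : [−s₀, s₀] → ℝ with h'(s₀) = 0, h'(−s₀) = 0, and h not identically zero, one has ∫_{−s₀}^{s₀} ( B(s)³·h'(s)² + (3·B(s)² − 2·K²)·h(s)²/B(s) ) ds > 0. -/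
namespace MoriCatenoid

/-- Closure of condition (E) for `1/2 < a ≤ 1`: `3·B(s)² − 2·K² ≥ 0` for all `s`,
and under the free boundary condition, for every `C¹` function `h` on `[−s₀, s₀]`
with `h'(±s₀) = 0` and `h` not identically zero, the Picone energy with base `B`
in mode `k = 2` is strictly positive. -/
theorem E_closure_a_le_one (a : ℝ) (ha : 1 / 2 < a) (ha1 : a ≤ 1) :
    (∀ s : ℝ, 0 ≤ 3 * B a s ^ 2 - 2 * K a ^ 2) ∧
    (∀ s₀ : ℝ, 0 < s₀ →
      Real.tanh (φ a s₀) = B a s₀ * K a / (a * Real.sinh (2 * s₀)) →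
      ∀ h : ℝ → ℝ, ContDiffOn ℝ 1 h (Set.Icc (-s₀) s₀) →
        derivWithin h (Set.Icc (-s₀) s₀) s₀ = 0 →
        derivWithin h (Set.Icc (-s₀) s₀) (-s₀) = 0 →
        (∃ s ∈ Set.Icc (-s₀) s₀, h s ≠ 0) →
        0 < ∫ s in (-s₀)..s₀,
            (B a s ^ 3 * (derivWithin h (Set.Icc (-s₀) s₀) s) ^ 2
              + (3 * B a s ^ 2 - 2 * K a ^ 2) * h s ^ 2 / B a s)) := by
  have hB2 : ∀ s : ℝ, B a s ^ 2 = a * Real.cosh (2 * s) - 1 / 2 := by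
    intro s
    unfold B
    refine Real.sq_sqrt ?_
    nlinarith [Real.one_le_cosh (2 * s)]
  have hBpos : ∀ s : ℝ, 0 < B a s := by
    intro s
    unfold B
    refine Real.sqrt_pos.mpr ?_
    nlinarith [Real.one_le_cosh (2 * s)]
  have hK2 : K a ^ 2 = a ^ 2 - 1 / 4 := by
    unfold K
    refine Real.sq_sqrt ?_
    nlinarith
  have hnn : ∀ s : ℝ, 0 ≤ 3 * B a s ^ 2 - 2 * K a ^ 2 := by
    intro s
    rw [hB2, hK2]
    nlinarith [Real.one_le_cosh (2 * s),
      mul_nonneg (by linarith : (0:ℝ) ≤ 2 * a - 1) (by linarith : (0:ℝ) ≤ 1 - a)]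
  have hpos : ∀ s : ℝ, s ≠ 0 → 0 < 3 * B a s ^ 2 - 2 * K a ^ 2 := by
    intro s hs
    rw [hB2, hK2]
    have h1 : 1 < Real.cosh (2 * s) := Real.one_lt_cosh.mpr (by simpa using hs)
    nlinarith [mul_pos (by linarith : (0:ℝ) < a) (sub_pos.mpr h1),
      mul_nonneg (by linarith : (0:ℝ) ≤ 2 * a - 1) (by linarith : (0:ℝ) ≤ 1 - a)]
  have hBc : Continuous (B a) := by
    unfold B
    exact Real.continuous_sqrt.comp
      ((continuous_const.mul (Real.continuous_cosh.comp (continuous_const.mul continuous_id))).sub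
        continuous_const)
  refine ⟨hnn, ?_⟩
  intro s₀ hs₀ _ h hh _ _ hex
  have hc : ContinuousOn h (Set.Icc (-s₀) s₀) := hh.continuousOn
  have hd : ContinuousOn (derivWithin h (Set.Icc (-s₀) s₀)) (Set.Icc (-s₀) s₀) :=
    hh.continuousOn_derivWithin (uniqueDiffOn_Icc (by linarith)) le_rfl
  have hex' : ∃ s ∈ Set.Icc (-s₀) s₀, s ≠ 0 ∧ h s ≠ 0 := by
    obtain ⟨s, hs, hne⟩ := hex
    by_cases h0 : s = 0
    · subst h0
      have hnb : Set.Icc (-s₀) s₀ ∈ nhds (0:ℝ) := Icc_mem_nhds (by linarith) hs₀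
      have hev := (hc.continuousAt hnb).eventually_ne hne
      have hev2 : ∀ᶠ x in nhdsWithin (0:ℝ) (Set.Ioi 0), h x ≠ 0 ∧ x ∈ Set.Icc (-s₀) s₀ :=
        nhdsWithin_le_nhds (hev.and hnb)
      obtain ⟨x, ⟨hx1, hx2⟩, hx3⟩ := (hev2.and self_mem_nhdsWithin).exists
      exact ⟨x, hx2, ne_of_gt hx3, hx1⟩
    · exact ⟨s, hs, h0, hne⟩
  refine intervalIntegral.integral_pos (by linarith) ?_ ?_ ?_
  · refine ContinuousOn.add ?_ ?_
    · exact (hBc.pow 3).continuousOn.mul (hd.pow 2)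
    · refine ContinuousOn.div ?_ hBc.continuousOn (fun x _ => (hBpos x).ne')
      exact ((continuous_const.mul (hBc.pow 2)).sub continuous_const).continuousOn.mul (hc.pow 2)
  · intro x _
    have := hBpos x
    have := hnn x
    positivity
  · obtain ⟨s, hs, h0, hne⟩ := hex'
    refine ⟨s, hs, ?_⟩
    have := hBpos s
    have := hpos s h0
    positivity

end MoriCatenoid
end

section
/- Geometric pinching identity: suppose s₀ > 0 satisfies the free boundary condition tanh(φ(s₀)) = B(s₀)·K/(a·sinh(2s₀)), and let r := arcosh(A(s₀)·cosh(φ(s₀))). Then sinh(r)² − 4·K² = (B(s₀)² − 2·K²)²/(B(s₀)² − K²). In particular sinh(r) ≥ 2·K, with equality if and only if B(s₀)² = 2·K². -/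
namespace MoriCatenoid

/-- Geometric pinching identity: under the free boundary condition,
`sinh(r)² − 4·K² = (B(s₀)² − 2·K²)²/(B(s₀)² − K²)`; in particular
`sinh(r) ≥ 2·K`, with equality iff `B(s₀)² = 2·K²`. -/
theorem pinching_identity (a : ℝ) (ha : 1 / 2 < a) (s₀ : ℝ) (hs₀ : 0 < s₀)
    (hFBC : Real.tanh (φ a s₀) = B a s₀ * K a / (a * Real.sinh (2 * s₀)))
    (r : ℝ) (hr : r = arcosh (A a s₀ * Real.cosh (φ a s₀))) :
    Real.sinh r ^ 2 - 4 * K a ^ 2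
      = (B a s₀ ^ 2 - 2 * K a ^ 2) ^ 2 / (B a s₀ ^ 2 - K a ^ 2) ∧
    2 * K a ≤ Real.sinh r ∧
    (Real.sinh r = 2 * K a ↔ B a s₀ ^ 2 = 2 * K a ^ 2) := by
  have hr' : r = Real.arcosh (A a s₀ * Real.cosh (φ a s₀)) := hr
  have hch : 1 ≤ Real.cosh (2 * s₀) := Real.one_le_cosh _
  have hac : a ≤ a * Real.cosh (2 * s₀) := by nlinarith
  have hB2 : B a s₀ ^ 2 = a * Real.cosh (2 * s₀) - 1 / 2 := Real.sq_sqrt (by linarith)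
  have hA2 : A a s₀ ^ 2 = a * Real.cosh (2 * s₀) + 1 / 2 := Real.sq_sqrt (by linarith)
  have hK2 : K a ^ 2 = a ^ 2 - 1 / 4 := Real.sq_sqrt (by nlinarith)
  have hA0 : 0 ≤ A a s₀ := Real.sqrt_nonneg _
  have hK0 : 0 ≤ K a := Real.sqrt_nonneg _
  have hsh : 0 < Real.sinh (2 * s₀) := Real.sinh_pos_iff.2 (by linarith)
  have hcs := Real.cosh_sq (2 * s₀)
  have hcp := Real.cosh_sq (φ a s₀)
  have hC1 : 1 ≤ Real.cosh (φ a s₀) := Real.one_le_cosh _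
  have hS : 0 < a * Real.sinh (2 * s₀) := mul_pos (by linarith) hsh
  have hA1 : 1 ≤ A a s₀ := by nlinarith
  have hX : 1 ≤ A a s₀ * Real.cosh (φ a s₀) := by nlinarith
  have hsr := Real.sinh_arcosh hX
  rw [← hr'] at hsr
  have hsr0 : 0 ≤ Real.sinh r := hsr ▸ Real.sqrt_nonneg _
  have hsr2 : Real.sinh r ^ 2 = A a s₀ ^ 2 * Real.cosh (φ a s₀) ^ 2 - 1 := by
    rw [hsr, Real.sq_sqrt (by nlinarith)]; ring
  have hS2 : (a * Real.sinh (2 * s₀)) ^ 2 = (B a s₀ ^ 2) ^ 2 + B a s₀ ^ 2 - K a ^ 2 := by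
    rw [hB2, hK2, mul_pow]
    linear_combination (-a ^ 2) * hcs
  have hAB : A a s₀ ^ 2 = B a s₀ ^ 2 + 1 := by linarith
  have hb : 0 < B a s₀ ^ 2 := by linarith
  rw [Real.tanh_eq_sinh_div_cosh, div_eq_div_iff (by positivity) hS.ne'] at hFBC
  have hF2 : (Real.cosh (φ a s₀) ^ 2 - 1) * (a * Real.sinh (2 * s₀)) ^ 2
      = B a s₀ ^ 2 * K a ^ 2 * Real.cosh (φ a s₀) ^ 2 := by
    have : Real.cosh (φ a s₀) ^ 2 - 1 = Real.sinh (φ a s₀) ^ 2 := by linarith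
    rw [this, ← mul_pow, hFBC]; ring
  have hS2p : 0 < (a * Real.sinh (2 * s₀)) ^ 2 := by positivity
  rw [hAB] at hsr2
  generalize Real.cosh (φ a s₀) = C at *
  generalize hbe : B a s₀ ^ 2 = b at *
  have hmul : C ^ 2 * (b + 1) * (b - K a ^ 2) = b ^ 2 + b - K a ^ 2 := by
    rw [hS2] at hF2; linear_combination hF2
  have hbk : 0 < b - K a ^ 2 := by
    rw [hS2, ← hmul] at hS2p
    exact pos_of_mul_pos_right hS2p (by positivity)
  have main : Real.sinh r ^ 2 - 4 * K a ^ 2 = (b - 2 * K a ^ 2) ^ 2 / (b - K a ^ 2) := by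
    rw [eq_div_iff hbk.ne', hsr2]
    linear_combination hmul
  refine ⟨main, ?_, ?_, ?_⟩
  · have : 0 ≤ (b - 2 * K a ^ 2) ^ 2 / (b - K a ^ 2) := by positivity
    apply abs_le_of_sq_le_sq' _ hsr0 |>.2
    nlinarith
  · intro h
    rw [h, eq_div_iff hbk.ne'] at main
    have : (b - 2 * K a ^ 2) ^ 2 = 0 := by rw [← main]; ring
    have := pow_eq_zero_iff (two_ne_zero) |>.1 this
    linarith
  · intro h
    rw [h] at main
    have h2 : Real.sinh r ^ 2 = (2 * K a) ^ 2 := by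
      simp at main; linarith
    exact (sq_eq_sq₀ hsr0 (by positivity)).1 h2

end MoriCatenoid
end

section
/- Upper bound on the angle function at the pinching point: for every a > 1/2, setting s* := (1/2)·arcosh(2a), one has φ(s*) < s*/√(a + 1/2), and consequently tanh(φ(s*)) < arcosh(2a)/(2·√(a + 1/2)). -/
namespace MoriCatenoid

theorem tanh_le_self_aux (x : ℝ) (hx : 0 ≤ x) : Real.tanh x ≤ x := by
  have hd : ∀ y : ℝ, HasDerivAt (fun y : ℝ => y * Real.cosh y - Real.sinh y)
      (y * Real.sinh y) y := by
    intro y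
    have h := ((hasDerivAt_id y).mul (Real.hasDerivAt_cosh y)).sub (Real.hasDerivAt_sinh y)
    refine h.congr_deriv ?_
    simp
  have hm : MonotoneOn (fun y : ℝ => y * Real.cosh y - Real.sinh y) (Set.Ici 0) := by
    apply monotoneOn_of_deriv_nonneg (convex_Ici 0)
    · exact fun y _ => (hd y).continuousAt.continuousWithinAt
    · exact fun y _ => (hd y).differentiableAt.differentiableWithinAt
    · intro y hy
      rw [interior_Ici, Set.mem_Ioi] at hy
      rw [(hd y).deriv]
      exact mul_nonneg hy.le (Real.sinh_nonneg_iff.2 hy.le)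
  have h := hm (Set.mem_Ici.2 le_rfl) (Set.mem_Ici.2 hx) hx
  simp only [zero_mul, Real.sinh_zero, sub_zero] at h
  rw [Real.tanh_eq_sinh_div_cosh, div_le_iff₀ (Real.cosh_pos x)]
  linarith

theorem phi_bound_aux (a s : ℝ) (ha : 1 / 2 < a) (hs : 0 < s) :
    0 ≤ φ a s ∧ φ a s < s / Real.sqrt (a + 1 / 2) := by
  have hc : ∀ t : ℝ, a ≤ a * Real.cosh (2 * t) := fun t => by
    have := Real.one_le_cosh (2 * t)
    nlinarith
  have hB : ∀ t, 0 < B a t := fun t => Real.sqrt_pos.2 (by have := hc t; linarith)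
  have hA : ∀ t, A a t ^ 2 = a * Real.cosh (2 * t) + 1 / 2 := fun t =>
    Real.sq_sqrt (by have := hc t; linarith)
  have hm : 0 < Real.sqrt (a - 1 / 2) := Real.sqrt_pos.2 (by linarith)
  have hp : 0 < Real.sqrt (a + 1 / 2) := Real.sqrt_pos.2 (by linarith)
  have hK : K a = Real.sqrt (a + 1 / 2) * Real.sqrt (a - 1 / 2) := by
    rw [K, ← Real.sqrt_mul (by linarith)]
    congr 1
    ring
  have hKpos : 0 < K a := by rw [hK]; positivity
  have hden : ∀ t, 0 < A a t ^ 2 * B a t := fun t =>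
    mul_pos (by rw [hA]; have := hc t; linarith) (hB t)
  have hBm : ∀ t, Real.sqrt (a - 1 / 2) ≤ B a t := fun t =>
    Real.sqrt_le_sqrt (by have := hc t; linarith)
  have hd0 : 0 < (a + 1 / 2) * Real.sqrt (a - 1 / 2) := mul_pos (by linarith) hm
  have hcont : Continuous (fun t => 1 / ((A a t) ^ 2 * B a t)) := by
    refine continuous_const.div ?_ (fun t => (hden t).ne')
    unfold A B
    fun_prop
  have hlt : (∫ t in (0:ℝ)..s, 1 / ((A a t) ^ 2 * B a t)) <
      ∫ _ in (0:ℝ)..s, 1 / ((a + 1 / 2) * Real.sqrt (a - 1 / 2)) := by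
    apply intervalIntegral.integral_lt_integral_of_continuousOn_of_le_of_exists_lt hs
      hcont.continuousOn continuousOn_const
    · intro t _
      apply one_div_le_one_div_of_le hd0
      rw [hA]
      have := hc t
      exact mul_le_mul (by linarith) (hBm t) hm.le (by linarith)
    · refine ⟨s, ⟨hs.le, le_rfl⟩, ?_⟩
      apply one_div_lt_one_div_of_lt hd0
      rw [hA]
      have h1 : 1 < Real.cosh (2 * s) := Real.one_lt_cosh.2 (by linarith)
      have h2 : a < a * Real.cosh (2 * s) := by nlinarith
      exact mul_lt_mul (by linarith) (hBm s) hm (by linarith)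
  constructor
  · exact mul_nonneg hKpos.le
      (intervalIntegral.integral_nonneg hs.le (fun t _ => (one_div_pos.2 (hden t)).le))
  · have h := mul_lt_mul_of_pos_left hlt hKpos
    refine lt_of_lt_of_eq h ?_
    rw [intervalIntegral.integral_const, hK, smul_eq_mul]
    have hsq : Real.sqrt (a + 1 / 2) ^ 2 = a + 1 / 2 := Real.sq_sqrt (by linarith)
    generalize Real.sqrt (a + 1 / 2) = p at *
    generalize Real.sqrt (a - 1 / 2) = m at *
    rw [← hsq]
    have hp' := hp.ne'
    have hm' := hm.ne'
    rw [sub_zero]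
    field_simp

/-- Upper bound on the angle function at the pinching point: with
`s* = (1/2)·arcosh(2a)`, one has `φ(s*) < s*/√(a + 1/2)` and consequently
`tanh(φ(s*)) < arcosh(2a)/(2·√(a + 1/2))`. -/
theorem angle_bound_at_pinching (a : ℝ) (ha : 1 / 2 < a) (sstar : ℝ)
    (hsstar : sstar = 1 / 2 * arcosh (2 * a)) :
    φ a sstar < sstar / Real.sqrt (a + 1 / 2) ∧
    Real.tanh (φ a sstar) < arcosh (2 * a) / (2 * Real.sqrt (a + 1 / 2)) := by
  have harc : 0 < arcosh (2 * a) := Real.arcosh_pos (by linarith)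
  have hs : 0 < sstar := by rw [hsstar]; linarith
  obtain ⟨h0, h1⟩ := phi_bound_aux a sstar ha hs
  refine ⟨h1, lt_of_le_of_lt (tanh_le_self_aux _ h0) (lt_of_lt_of_eq h1 ?_)⟩
  rw [hsstar, ← div_div]
  ring

end MoriCatenoid
end

section
/- Transcendental inequality: for every real u with 0 < u ≤ 1, one has (u + 2)·√u > (u + 1)·arcosh(u + 1). -/
namespace MoriCatenoid

/-- Transcendental inequality: for every real `u` with `0 < u ≤ 1`,
`(u + 2)·√u > (u + 1)·arcosh(u + 1)`. -/
theorem transcendental_inequality (u : ℝ) (hu0 : 0 < u) (hu1 : u ≤ 1) :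
    (u + 1) * arcosh (u + 1) < (u + 2) * Real.sqrt u := by
  have hs : 0 < Real.sqrt u := Real.sqrt_pos.mpr hu0
  have hsq : Real.sqrt u ^ 2 = u := Real.sq_sqrt hu0.le
  have h2 : Real.sqrt 2 ^ 2 = 2 := Real.sq_sqrt (by norm_num)
  have h2p : 0 < Real.sqrt 2 := Real.sqrt_pos.mpr (by norm_num)
  have key : arcosh (u + 1) ≤ Real.sqrt 2 * Real.sqrt u := by
    have hx : 0 ≤ Real.sqrt 2 * Real.sqrt u := by positivity
    have hc : u + 1 ≤ Real.cosh (Real.sqrt 2 * Real.sqrt u) := by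
      set y := Real.sqrt 2 * Real.sqrt u / 2 with hy
      have hy0 : 0 ≤ y := by positivity
      have e : Real.sqrt 2 * Real.sqrt u = 2 * y := by rw [hy]; ring
      have hyy : y ^ 2 = u / 2 := by
        rw [hy, div_pow, mul_pow, h2, hsq]; ring
      rw [e, Real.cosh_two_mul, Real.cosh_sq]
      have := pow_le_pow_left₀ hy0 (Real.self_le_sinh_iff.mpr hy0) 2
      linarith
    have h := (Real.arcosh_le_arcosh (by linarith) (Real.cosh_pos _)).mpr hc
    rw [Real.arcosh_cosh hx] at h
    exact h
  have h1 : (1 : ℝ) < Real.sqrt 2 := by nlinarith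
  have h3 : (u + 1) * Real.sqrt 2 < u + 2 := by nlinarith
  calc (u + 1) * arcosh (u + 1) ≤ (u + 1) * (Real.sqrt 2 * Real.sqrt u) := by gcongr
    _ = ((u + 1) * Real.sqrt 2) * Real.sqrt u := by ring
    _ < (u + 2) * Real.sqrt u := by gcongr

end MoriCatenoid
end

section
/- Analytic closure of the strict geometric condition (G) for 1/2 < a ≤ 1: if 1/2 < a ≤ 1 and s₀ > 0 satisfies the free boundary condition tanh(φ(s₀)) = B(s₀)·K/(a·sinh(2s₀)), then cosh(2·s₀) > 2a; equivalently B(s₀)² > 2·K². -/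
namespace MoriCatenoid

/-- Crude bound on `φ`: bound the integrand by its value at `0`. -/
theorem phi_le_aux (a : ℝ) (ha : 1 / 2 < a) (s : ℝ) (hs : 0 < s) :
    0 ≤ φ a s ∧ φ a s ≤ K a * (s / ((a + 1 / 2) * Real.sqrt (a - 1 / 2))) := by
  have hq : 0 < Real.sqrt (a - 1 / 2) := Real.sqrt_pos.mpr (by linarith)
  have hK : 0 ≤ K a := Real.sqrt_nonneg _
  have hpos : ∀ t : ℝ, 0 ≤ 1 / ((A a t) ^ 2 * B a t) := fun t =>
    div_nonneg zero_le_one (mul_nonneg (sq_nonneg _) (Real.sqrt_nonneg _))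
  have hb : ∀ t : ℝ, 1 / ((A a t) ^ 2 * B a t) ≤ 1 / ((a + 1 / 2) * Real.sqrt (a - 1 / 2)) := by
    intro t
    have hc := Real.one_le_cosh (2 * t)
    have hac : a ≤ a * Real.cosh (2 * t) := by nlinarith
    have hA : a + 1 / 2 ≤ A a t ^ 2 := by
      unfold A
      rw [Real.sq_sqrt (by linarith)]
      linarith
    have hB : Real.sqrt (a - 1 / 2) ≤ B a t := Real.sqrt_le_sqrt (by linarith)
    apply one_div_le_one_div_of_le (by positivity)
    exact mul_le_mul hA hB hq.le (sq_nonneg _)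
  constructor
  · exact mul_nonneg hK (intervalIntegral.integral_nonneg hs.le fun t _ => hpos t)
  · apply mul_le_mul_of_nonneg_left _ hK
    have h := intervalIntegral.norm_integral_le_of_norm_le_const (a := 0) (b := s)
      (f := fun t => 1 / ((A a t) ^ 2 * B a t))
      (C := 1 / ((a + 1 / 2) * Real.sqrt (a - 1 / 2)))
      (fun t _ => by rw [Real.norm_of_nonneg (hpos t)]; exact hb t)
    rw [sub_zero, abs_of_pos hs] at h
    calc _ ≤ _ := Real.le_norm_self _
      _ ≤ _ := h
      _ = _ := by ring

/-- The purely algebraic comparison. -/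
theorem compare_aux (a : ℝ) (ha : 1 / 2 < a) (ha1 : a ≤ 1) (s : ℝ) (hs : 0 < s)
    (hc : Real.cosh (2 * s) ≤ 2 * a) :
    s * (a * Real.sinh (2 * s)) < B a s * ((a + 1 / 2) * Real.sqrt (a - 1 / 2)) := by
  have hx : 0 < Real.sinh s := Real.sinh_pos_iff.mpr hs
  have hsx : s ≤ Real.sinh s := Real.self_le_sinh_iff.mpr hs.le
  have hcp := Real.cosh_pos s
  have hcs := Real.cosh_sq s
  have hB2 : B a s ^ 2 = a * (1 + 2 * Real.sinh s ^ 2) - 1 / 2 := by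
    unfold B
    rw [Real.sq_sqrt, Real.cosh_two_mul, hcs]
    · ring
    · have := Real.one_le_cosh (2 * s)
      nlinarith
  rw [Real.cosh_two_mul, hcs] at hc
  rw [Real.sinh_two_mul]
  have hBn : 0 ≤ B a s := Real.sqrt_nonneg _
  have hq2 : Real.sqrt (a - 1 / 2) ^ 2 = a - 1 / 2 := Real.sq_sqrt (by linarith)
  have hqn : 0 ≤ Real.sqrt (a - 1 / 2) := Real.sqrt_nonneg _
  generalize Real.sqrt (a - 1 / 2) = q at *
  generalize B a s = b at *
  generalize Real.sinh s = x at *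
  generalize Real.cosh s = c at *
  have h1 : s * (a * (2 * x * c)) ≤ x * (a * (2 * x * c)) :=
    mul_le_mul_of_nonneg_right hsx (by positivity)
  refine lt_of_le_of_lt h1 ?_
  apply lt_of_pow_lt_pow_left₀ 2 (by positivity)
  have e1 : (x * (a * (2 * x * c))) ^ 2 = 4 * a ^ 2 * (x ^ 2) ^ 2 * (x ^ 2 + 1) := by
    rw [← hcs]; ring
  have e2 : (b * ((a + 1 / 2) * q)) ^ 2
      = (a * (1 + 2 * x ^ 2) - 1 / 2) * (a + 1 / 2) ^ 2 * (a - 1 / 2) := by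
    rw [← hB2, ← hq2]; ring
  rw [e1, e2]
  have hy : 0 < x ^ 2 := by positivity
  generalize x ^ 2 = y at *
  have hye : y ≤ a - 1 / 2 := by linarith
  calc 4 * a ^ 2 * y ^ 2 * (y + 1) ≤ 4 * a ^ 2 * y ^ 2 * (a + 1 / 2) := by
        apply mul_le_mul_of_nonneg_left _ (by positivity); linarith
    _ = (4 * a ^ 2) * (y ^ 2 * (a + 1 / 2)) := by ring
    _ < (2 * (a + 1 / 2) ^ 2) * (y ^ 2 * (a + 1 / 2)) := by
        apply mul_lt_mul_of_pos_right _ (by positivity); nlinarith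
    _ = (y * (1 + 2 * a)) * (a + 1 / 2) ^ 2 * y := by ring
    _ ≤ (a * (1 + 2 * y) - 1 / 2) * (a + 1 / 2) ^ 2 * (a - 1 / 2) := by
        apply mul_le_mul _ hye hy.le
        · apply mul_nonneg _ (sq_nonneg _); nlinarith
        · apply mul_le_mul_of_nonneg_right _ (sq_nonneg _); linarith

/-- Analytic closure of the strict geometric condition (G) for `1/2 < a ≤ 1`:
under the free boundary condition, `cosh(2s₀) > 2a`; equivalently `B(s₀)² > 2·K²`. -/
theorem G_closure_a_le_one (a : ℝ) (ha : 1 / 2 < a) (ha1 : a ≤ 1)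
    (s₀ : ℝ) (hs₀ : 0 < s₀)
    (hFBC : Real.tanh (φ a s₀) = B a s₀ * K a / (a * Real.sinh (2 * s₀))) :
    2 * a < Real.cosh (2 * s₀) ∧ 2 * K a ^ 2 < B a s₀ ^ 2 := by
  have hK2 : K a ^ 2 = a ^ 2 - 1 / 4 := Real.sq_sqrt (by nlinarith)
  have hKp : 0 < K a := Real.sqrt_pos.mpr (by nlinarith)
  have hB2 : B a s₀ ^ 2 = a * Real.cosh (2 * s₀) - 1 / 2 :=
    Real.sq_sqrt (by nlinarith [Real.one_le_cosh (2 * s₀)])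
  have key : 2 * a < Real.cosh (2 * s₀) := by
    by_contra hcon
    have hc : Real.cosh (2 * s₀) ≤ 2 * a := not_lt.mp hcon
    have hcmp := compare_aux a ha ha1 s₀ hs₀ hc
    obtain ⟨h0, h1⟩ := phi_le_aux a ha s₀ hs₀
    have h2 := tanh_le_self_aux _ h0
    have hq : 0 < Real.sqrt (a - 1 / 2) := Real.sqrt_pos.mpr (by linarith)
    have hS : 0 < Real.sinh (2 * s₀) := Real.sinh_pos_iff.mpr (by linarith)
    have hD : 0 < (a + 1 / 2) * Real.sqrt (a - 1 / 2) := by positivity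
    have hE : 0 < a * Real.sinh (2 * s₀) := by positivity
    have h3 : s₀ / ((a + 1 / 2) * Real.sqrt (a - 1 / 2)) < B a s₀ / (a * Real.sinh (2 * s₀)) :=
      (div_lt_div_iff₀ hD hE).mpr hcmp
    have h4 := mul_lt_mul_of_pos_left h3 hKp
    have h5 : K a * (B a s₀ / (a * Real.sinh (2 * s₀)))
        = B a s₀ * K a / (a * Real.sinh (2 * s₀)) := by ring
    linarith
  refine ⟨key, ?_⟩
  rw [hK2, hB2]
  nlinarith

end MoriCatenoid
end
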